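/- arXiv:2106.02717 — 2 statements merged into one kernel-verified Lean document; each statement's English description precedes it below -/
import Mathlib

section
/- (Van der Corput) There is a constant C > 0 with the following property: for all real a < b, all t > 0, all A > 0, every g ∈ C¹(a,b) and every ψ ∈ C²(a,b) with |ψ''(r)| ≥ A for all r ∈ (a,b), one has |∫_a^b e^{i t ψ(r)} g(r) dr| ≤ C (A t)^{-1/2} [ |g(b)| + ∫_a^b |g'(r)| dr ], whenever the integrals are finite. The constant C is independent of a, b and t. -/
/-!
By Darboux's theorem `φ''` has constant sign when `|φ''| ≥ m > 0`; by conjugation take `φ'' ≥ m`.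
Where also `|φ'| ≥ l`, write `e^{iφ} = (φ' e^{iφ}) (1/φ')`: the first factor has primitives bounded
by `2`, and `1/φ'` is monotone of size and total variation at most `1/l`, so integration by parts
gives `|∫ e^{iφ}| ≤ 4/l`. Now `|φ'(r)| ≥ m |r - c|` for some `c`, so this applies with `l = mδ` at
distance at least `δ` from `c`; the rest contributes at most `2δ`, and `δ = 2/√m` balances the two
terms. A second integration by parts, against the primitives of `e^{iφ}`, brings in the amplitude.
-/

noncomputable section

open MeasureTheory Complex Real

section Oscillatory

open Set

variable {E : Type*} [NormedAddCommGroup E] [NormedSpace ℝ E] {a b : ℝ}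

lemma hasDerivAt_of_hasDerivWithinAt_Icc {f f' : ℝ → E}
    (hf : ∀ r ∈ Icc a b, HasDerivWithinAt f (f' r) (Icc a b) r) :
    ∀ r ∈ Ioo a b, HasDerivAt f (f' r) r :=
  fun r hr => (hf r (Ioo_subset_Icc_self hr)).hasDerivAt (Icc_mem_nhds hr.1 hr.2)

lemma norm_integral_le_of_forall_subinterval {f : ℝ → E} {M : ℝ} (hM : 0 ≤ M) (hab : a ≤ b)
    (hf : IntervalIntegrable f volume a b)
    (hle : ∀ x y, a < x → x ≤ y → y < b → ‖∫ r in x..y, f r‖ ≤ M) :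
    ‖∫ r in a..b, f r‖ ≤ M := by
  rcases hab.eq_or_lt with rfl | hab
  · simpa using hM
  set F : ℝ → E := fun x => ∫ r in a..x, f r with hF
  have continuousOn_F : ContinuousOn F (Icc a b) := by
    simpa only [uIcc_of_le hab.le] using
      intervalIntegral.continuousOn_primitive_interval' hf left_mem_uIcc
  have norm_sub_le_of_le : ∀ x ∈ Ioo a b, ∀ y ∈ Ioo a b, x ≤ y → ‖F y - F x‖ ≤ M := by
    intro x hx y hy hxy
    have integrable_to {z : ℝ} (hz : z ∈ Ioo a b) : IntervalIntegrable f volume a z :=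
      hf.mono_set (uIcc_subset_uIcc_left (by
        rw [uIcc_of_le hab.le]; exact Ioo_subset_Icc_self hz))
    simpa only [hF, intervalIntegral.integral_interval_sub_left (integrable_to hy)
      (integrable_to hx)] using hle x y hx.1 hxy hy.2
  have norm_sub_le : ∀ p ∈ Ioo a b ×ˢ Ioo a b, ‖F p.2 - F p.1‖ ≤ M := by
    rintro ⟨x, y⟩ ⟨hx, hy⟩
    rcases le_total x y with hxy | hyx
    · exact norm_sub_le_of_le x hx y hy hxy
    · exact norm_sub_rev (F y) (F x) ▸ norm_sub_le_of_le y hy x hx hyx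
  have hclosure : closure (Ioo a b ×ˢ Ioo a b) = Icc a b ×ˢ Icc a b := by
    rw [closure_prod_eq, closure_Ioo hab.ne]
  have continuousOn_sub : ContinuousOn (fun p : ℝ × ℝ => F p.2 - F p.1) (Icc a b ×ˢ Icc a b) :=
    (continuousOn_F.comp continuousOn_snd fun _ hp => hp.2).sub
      (continuousOn_F.comp continuousOn_fst fun _ hp => hp.1)
  have hends : (a, b) ∈ Icc a b ×ˢ Icc a b :=
    ⟨left_mem_Icc.2 hab.le, right_mem_Icc.2 hab.le⟩
  rw [← hclosure] at continuousOn_sub hends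
  simpa [hF] using le_on_closure norm_sub_le continuousOn_sub.norm continuousOn_const hends

lemma norm_integral_le_norm_integral_add_add {f : ℝ → E} {p q : ℝ}
    (hf : IntervalIntegrable f volume a b) (hp : p ∈ uIcc a b) (hq : q ∈ uIcc a b) :
    ‖∫ r in a..b, f r‖ ≤
      ‖∫ r in a..p, f r‖ + ‖∫ r in p..q, f r‖ + ‖∫ r in q..b, f r‖ := by
  have hap := hf.mono_set (uIcc_subset_uIcc_left hp)
  have hpq := hf.mono_set (uIcc_subset_uIcc hp hq)
  have hqb := hf.mono_set (uIcc_subset_uIcc_right hq)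
  rw [← intervalIntegral.integral_add_adjacent_intervals (hap.trans hpq) hqb,
    ← intervalIntegral.integral_add_adjacent_intervals hap hpq]
  exact norm_add₃_le

lemma norm_integral_smul_le_of_norm_primitive_le {𝕜 : Type*} [RCLike 𝕜] [NormedSpace 𝕜 E]
    [IsScalarTower ℝ 𝕜 E] [CompleteSpace E] {M : ℝ} {u : ℝ → 𝕜} {g g' : ℝ → E} (hab : a ≤ b)
    (hu : ContinuousOn u (Ioo a b)) (hu_int : IntervalIntegrable u volume a b)
    (hg : ContinuousOn g (Icc a b)) (hgg' : ∀ r ∈ Ioo a b, HasDerivAt g (g' r) r)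
    (hg' : IntervalIntegrable g' volume a b)
    (hM : ∀ x ∈ Icc a b, ‖∫ r in a..x, u r‖ ≤ M) :
    ‖∫ r in a..b, u r • g r‖ ≤ M * (‖g b‖ + ∫ r in a..b, ‖g' r‖) := by
  set U : ℝ → 𝕜 := fun x => ∫ r in a..x, u r with hU
  have hU' : ∀ x ∈ Ioo a b, HasDerivAt U (u x) x := fun x hx =>
    intervalIntegral.integral_hasDerivAt_right
      (hu_int.mono_set (uIcc_subset_uIcc_left (by
        rw [uIcc_of_le hab]; exact Ioo_subset_Icc_self hx)))
      (hu.stronglyMeasurableAtFilter isOpen_Ioo x hx) (hu.continuousAt (Ioo_mem_nhds hx.1 hx.2))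
  have by_parts : ∫ r in a..b, u r • g r = U b • g b - ∫ r in a..b, U r • g' r := by
    rw [intervalIntegral.integral_smul_deriv_eq_deriv_smul_of_hasDerivAt (u' := u)
      (intervalIntegral.continuousOn_primitive_interval' hu_int left_mem_uIcc)
      (by rwa [uIcc_of_le hab]) (by rwa [min_eq_left hab, max_eq_right hab])
      (by rwa [min_eq_left hab, max_eq_right hab]) hu_int hg']
    simp [hU]
  have hboundary : ‖U b • g b‖ ≤ M * ‖g b‖ :=
    (norm_smul_le _ _).trans (by gcongr; exact hM b (right_mem_Icc.2 hab))
  have hremainder : ‖∫ r in a..b, U r • g' r‖ ≤ M * ∫ r in a..b, ‖g' r‖ := by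
    rw [← intervalIntegral.integral_const_mul]
    refine intervalIntegral.norm_integral_le_of_norm_le hab (ae_of_all _ fun r hr => ?_)
      (hg'.norm.const_mul M)
    exact (norm_smul_le _ _).trans (by gcongr; exact hM r (Ioc_subset_Icc_self hr))
  rw [by_parts, mul_add]
  exact (norm_sub_le _ _).trans (add_le_add hboundary hremainder)

lemma forall_le_or_forall_le_neg_of_le_abs_deriv {s : Set ℝ} (hs : Convex ℝ s) {m : ℝ}
    (hm : 0 < m) {f f' : ℝ → ℝ} (hf : ∀ r ∈ s, HasDerivWithinAt f (f' r) s r)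
    (hle : ∀ r ∈ s, m ≤ |f' r|) : (∀ r ∈ s, m ≤ f' r) ∨ (∀ r ∈ s, f' r ≤ -m) := by
  have hne : ∀ r ∈ s, f' r ≠ 0 := fun r hr => abs_pos.1 (hm.trans_le (hle r hr))
  rcases hasDerivWithinAt_forall_lt_or_forall_gt_of_forall_ne hs hf hne with hneg | hpos
  · exact .inr fun r hr => le_neg_of_le_neg (abs_of_neg (hneg r hr) ▸ hle r hr)
  · exact .inl fun r hr => abs_of_pos (hpos r hr) ▸ hle r hr

lemma exists_forall_mul_abs_sub_le_abs {m : ℝ} (hab : a ≤ b) {f : ℝ → ℝ}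
    (hf : ContinuousOn f (Icc a b))
    (hslope : ∀ x ∈ Icc a b, ∀ y ∈ Icc a b, x ≤ y → m * (y - x) ≤ f y - f x) :
    ∃ c ∈ Icc a b, ∀ r ∈ Icc a b, m * |r - c| ≤ |f r| := by
  have right_of {c r : ℝ} (hc : c ∈ Icc a b) (hr : r ∈ Icc a b) (hcr : c ≤ r) (hfc : 0 ≤ f c) :
      m * |r - c| ≤ |f r| := by
    rw [abs_of_nonneg (sub_nonneg.2 hcr)]
    exact le_trans (by linarith [hslope c hc r hr hcr]) (le_abs_self _)
  have left_of {c r : ℝ} (hc : c ∈ Icc a b) (hr : r ∈ Icc a b) (hrc : r ≤ c) (hfc : f c ≤ 0) :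
      m * |r - c| ≤ |f r| := by
    rw [abs_sub_comm, abs_of_nonneg (sub_nonneg.2 hrc)]
    exact le_trans (by linarith [hslope r hr c hc hrc]) (neg_le_abs _)
  have ha := left_mem_Icc.2 hab
  have hb := right_mem_Icc.2 hab
  rcases le_or_gt 0 (f a) with hfa | hfa
  · exact ⟨a, ha, fun r hr => right_of ha hr hr.1 hfa⟩
  rcases le_or_gt (f b) 0 with hfb | hfb
  · exact ⟨b, hb, fun r hr => left_of hb hr hr.2 hfb⟩
  obtain ⟨c, hc, hfc⟩ := intermediate_value_Icc hab hf ⟨hfa.le, hfb.le⟩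
  exact ⟨c, hc, fun r hr => (le_total c r).elim (right_of hc hr · hfc.ge) (left_of hc hr · hfc.le)⟩

lemma hasDerivAt_neg_inv {f : ℝ → ℝ} {f' r : ℝ} (hf : HasDerivAt f f' r) (hne : f r ≠ 0) :
    HasDerivAt (fun r => -(f r)⁻¹) (f' / f r ^ 2) r :=
  (hf.fun_inv hne).fun_neg.congr_deriv (by ring)

lemma intervalIntegrable_deriv_div_sq {f f' : ℝ → ℝ}
    (hf : ∀ r ∈ uIcc a b, HasDerivAt f (f' r) r) (hne : ∀ r ∈ uIcc a b, f r ≠ 0)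
    (hnonneg : ∀ r ∈ uIcc a b, 0 ≤ f' r) :
    IntervalIntegrable (fun r => f' r / f r ^ 2) volume a b := by
  have hderiv : ∀ r ∈ uIcc a b, HasDerivAt (fun r => -(f r)⁻¹) (f' r / f r ^ 2) r :=
    fun r hr => hasDerivAt_neg_inv (hf r hr) (hne r hr)
  exact intervalIntegral.intervalIntegrable_deriv_of_nonneg (HasDerivAt.continuousOn hderiv)
    (fun r hr => hderiv r (Ioo_subset_Icc_self hr))
    fun r hr => div_nonneg (hnonneg r (Ioo_subset_Icc_self hr)) (sq_nonneg _)

lemma integral_deriv_div_sq {f f' : ℝ → ℝ}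
    (hf : ∀ r ∈ uIcc a b, HasDerivAt f (f' r) r) (hne : ∀ r ∈ uIcc a b, f r ≠ 0)
    (hnonneg : ∀ r ∈ uIcc a b, 0 ≤ f' r) :
    ∫ r in a..b, f' r / f r ^ 2 = (f a)⁻¹ - (f b)⁻¹ := by
  rw [intervalIntegral.integral_eq_sub_of_hasDerivAt
    (fun r hr => hasDerivAt_neg_inv (hf r hr) (hne r hr))
    (intervalIntegrable_deriv_div_sq hf hne hnonneg)]
  ring

variable {φ φ' φ'' : ℝ → ℝ} {l m : ℝ}

lemma intervalIntegrable_cexp_I_mul (hab : a ≤ b) (hφ : ContinuousOn φ (Ioo a b)) :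
    IntervalIntegrable (fun r => cexp (I * φ r)) volume a b := by
  have hcont : ContinuousOn (fun r => cexp (I * φ r)) (Ioo a b) := by fun_prop
  rw [intervalIntegrable_iff_integrableOn_Ioo_of_le hab]
  exact .of_bound measure_Ioo_lt_top (hcont.aestronglyMeasurable measurableSet_Ioo) 1
    (ae_of_all _ fun r => (norm_exp_I_mul_ofReal (φ r)).le)

lemma norm_integral_cexp_le_sub (hab : a ≤ b) : ‖∫ r in a..b, cexp (I * φ r)‖ ≤ b - a := by
  simpa [abs_of_nonneg (sub_nonneg.2 hab)] using intervalIntegral.norm_integral_le_of_norm_le_const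
    (a := a) (b := b) fun r _ => (norm_exp_I_mul_ofReal (φ r)).le

lemma norm_integral_cexp_I_mul_neg :
    ‖∫ r in a..b, cexp (I * (-φ r : ℝ))‖ = ‖∫ r in a..b, cexp (I * φ r)‖ := by
  rw [← norm_conj, ← intervalIntegral.intervalIntegral_conj]
  simp [← Complex.exp_conj]

lemma norm_integral_deriv_mul_cexp_le_two (hφ : ∀ r ∈ uIcc a b, HasDerivAt φ (φ' r) r)
    (hφ' : ContinuousOn φ' (uIcc a b)) :
    ‖∫ r in a..b, φ' r * cexp (I * φ r)‖ ≤ 2 := by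
  have hφ_cont : ContinuousOn φ (uIcc a b) := HasDerivAt.continuousOn hφ
  have hprimitive : ∀ r ∈ uIcc a b,
      HasDerivAt (fun r => -I * cexp (I * φ r)) (φ' r * cexp (I * φ r)) r := fun r hr =>
    ((((hφ r hr).ofReal_comp.const_mul I).cexp).const_mul (-I)).congr_deriv
      (by linear_combination (-φ' r * cexp (I * φ r)) * I_sq)
  rw [intervalIntegral.integral_eq_sub_of_hasDerivAt hprimitive
    (ContinuousOn.intervalIntegrable (by fun_prop))]
  refine (norm_sub_le _ _).trans_eq ?_
  norm_num [norm_exp_I_mul_ofReal]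

lemma norm_integral_deriv_mul_cexp_smul_le {F : Type*} [NormedAddCommGroup F] [NormedSpace ℂ F]
    [CompleteSpace F] {g g' : ℝ → F} (hab : a ≤ b) (hφ : ∀ r ∈ Icc a b, HasDerivAt φ (φ' r) r)
    (hφ' : ContinuousOn φ' (Icc a b)) (hg : ContinuousOn g (Icc a b))
    (hgg' : ∀ r ∈ Ioo a b, HasDerivAt g (g' r) r) (hg' : IntervalIntegrable g' volume a b) :
    ‖∫ r in a..b, (φ' r * cexp (I * φ r)) • g r‖ ≤ 2 * (‖g b‖ + ∫ r in a..b, ‖g' r‖) := by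
  have hφ_cont : ContinuousOn φ (Icc a b) := HasDerivAt.continuousOn hφ
  have hu : ContinuousOn (fun r => φ' r * cexp (I * φ r)) (Icc a b) := by fun_prop
  refine norm_integral_smul_le_of_norm_primitive_le hab (hu.mono Ioo_subset_Icc_self)
    (hu.intervalIntegrable_of_Icc hab) hg hgg' hg' fun x hx => ?_
  have hsub : uIcc a x ⊆ Icc a b := uIcc_subset_Icc (left_mem_Icc.2 hab) hx
  exact norm_integral_deriv_mul_cexp_le_two (fun r hr => hφ r (hsub hr)) (hφ'.mono hsub)

lemma abs_inv_sub_inv_le_of_le_abs_deriv (hl : 0 < l) {s : Set ℝ} (hs : Convex ℝ s)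
    (hφ : ∀ r ∈ s, HasDerivWithinAt φ (φ' r) s r) (hle : ∀ r ∈ s, l ≤ |φ' r|) {x y : ℝ}
    (hx : x ∈ s) (hy : y ∈ s) : |(φ' x)⁻¹ - (φ' y)⁻¹| ≤ l⁻¹ := by
  rcases forall_le_or_forall_le_neg_of_le_abs_deriv hs hl hφ hle with hpos | hneg
  · have hinv {r : ℝ} (hr : r ∈ s) : (φ' r)⁻¹ ∈ Icc 0 l⁻¹ :=
      ⟨inv_nonneg.2 (hl.le.trans (hpos r hr)), inv_anti₀ hl (hpos r hr)⟩
    simpa [Real.dist_eq] using Real.dist_le_of_mem_Icc (hinv hx) (hinv hy)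
  · have hinv {r : ℝ} (hr : r ∈ s) : (φ' r)⁻¹ ∈ Icc (-l⁻¹) 0 := by
      have hr_neg := neg_pos.1 (hl.trans_le (le_neg_of_le_neg (hneg r hr)))
      rw [← inv_neg]
      exact ⟨(inv_le_inv_of_neg (neg_neg_of_pos hl) hr_neg).2 (hneg r hr), (inv_neg''.2 hr_neg).le⟩
    simpa [Real.dist_eq] using Real.dist_le_of_mem_Icc (hinv hx) (hinv hy)

lemma norm_integral_cexp_le_of_deriv_ne_zero (hab : a ≤ b)
    (hφ : ∀ r ∈ Icc a b, HasDerivAt φ (φ' r) r) (hφ' : ∀ r ∈ Icc a b, HasDerivAt φ' (φ'' r) r)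
    (hne : ∀ r ∈ Icc a b, φ' r ≠ 0) (hnonneg : ∀ r ∈ Icc a b, 0 ≤ φ'' r) :
    ‖∫ r in a..b, cexp (I * φ r)‖ ≤ 2 * (|(φ' b)⁻¹| + |(φ' a)⁻¹ - (φ' b)⁻¹|) := by
  have hinv : ∀ r ∈ Icc a b,
      HasDerivAt (fun r => (((φ' r)⁻¹ : ℝ) : ℂ)) (-φ'' r / φ' r ^ 2 : ℝ) r :=
    fun r hr => ((hφ' r hr).fun_inv (hne r hr)).ofReal_comp
  have factor : ∫ r in a..b, cexp (I * φ r) =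
      ∫ r in a..b, (φ' r * cexp (I * φ r)) • (((φ' r)⁻¹ : ℝ) : ℂ) := by
    refine intervalIntegral.integral_congr fun r hr => ?_
    have : (φ' r : ℂ) ≠ 0 := ofReal_ne_zero.2 (hne r (uIcc_of_le hab ▸ hr))
    simp only [ofReal_inv, smul_eq_mul]
    field_simp
  have hφ'_cont : ContinuousOn φ' (Icc a b) := HasDerivAt.continuousOn hφ'
  rw [← uIcc_of_le hab] at hne hnonneg hφ'
  have hinv_int : IntervalIntegrable (fun r => ((-φ'' r / φ' r ^ 2 : ℝ) : ℂ)) volume a b := by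
    have := (intervalIntegrable_deriv_div_sq hφ' hne hnonneg).neg
    simp only [neg_div]
    exact ⟨this.1.ofReal, this.2.ofReal⟩
  have variation : ∫ r in a..b, ‖((-φ'' r / φ' r ^ 2 : ℝ) : ℂ)‖ = (φ' a)⁻¹ - (φ' b)⁻¹ := by
    rw [← integral_deriv_div_sq hφ' hne hnonneg]
    refine intervalIntegral.integral_congr fun r hr => ?_
    simp only [norm_real, Real.norm_eq_abs, neg_div, abs_neg]
    exact abs_of_nonneg (div_nonneg (hnonneg r hr) (sq_nonneg _))
  calc ‖∫ r in a..b, cexp (I * φ r)‖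
      ≤ 2 * (‖(((φ' b)⁻¹ : ℝ) : ℂ)‖ + ∫ r in a..b, ‖((-φ'' r / φ' r ^ 2 : ℝ) : ℂ)‖) :=
        factor ▸ norm_integral_deriv_mul_cexp_smul_le hab hφ hφ'_cont
          (HasDerivAt.continuousOn hinv) (fun r hr => hinv r (Ioo_subset_Icc_self hr)) hinv_int
    _ ≤ 2 * (|(φ' b)⁻¹| + |(φ' a)⁻¹ - (φ' b)⁻¹|) := by
        rw [variation, norm_real, Real.norm_eq_abs]
        gcongr
        exact le_abs_self _

lemma norm_integral_cexp_le_of_le_abs_deriv (hab : a ≤ b) (hl : 0 < l)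
    (hφ : ∀ r ∈ Ioo a b, HasDerivAt φ (φ' r) r) (hφ' : ∀ r ∈ Ioo a b, HasDerivAt φ' (φ'' r) r)
    (hnonneg : ∀ r ∈ Ioo a b, 0 ≤ φ'' r) (hle : ∀ r ∈ Ioo a b, l ≤ |φ' r|) :
    ‖∫ r in a..b, cexp (I * φ r)‖ ≤ 4 / l := by
  refine norm_integral_le_of_forall_subinterval (by positivity) hab
    (intervalIntegrable_cexp_I_mul hab (HasDerivAt.continuousOn hφ)) fun x y hax hxy hyb => ?_
  have hsub : Icc x y ⊆ Ioo a b := Icc_subset_Ioo hax hyb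
  have hx : x ∈ Ioo a b := hsub (left_mem_Icc.2 hxy)
  have hy : y ∈ Ioo a b := hsub (right_mem_Icc.2 hxy)
  have boundary_le : |(φ' y)⁻¹| ≤ l⁻¹ := by
    rw [abs_inv]
    exact inv_anti₀ hl (hle y hy)
  have variation_le : |(φ' x)⁻¹ - (φ' y)⁻¹| ≤ l⁻¹ :=
    abs_inv_sub_inv_le_of_le_abs_deriv hl (convex_Ioo a b)
      (fun r hr => (hφ r hr).hasDerivWithinAt) hle hx hy
  calc ‖∫ r in x..y, cexp (I * φ r)‖
      ≤ 2 * (|(φ' y)⁻¹| + |(φ' x)⁻¹ - (φ' y)⁻¹|) :=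
        norm_integral_cexp_le_of_deriv_ne_zero hxy (fun r hr => hφ r (hsub hr))
          (fun r hr => hφ' r (hsub hr)) (fun r hr => abs_pos.1 (hl.trans_le (hle r (hsub hr))))
          fun r hr => hnonneg r (hsub hr)
    _ ≤ 2 * (l⁻¹ + l⁻¹) := by gcongr
    _ = 4 / l := by ring

lemma norm_integral_cexp_le_of_mul_abs_sub_le_abs_deriv {c δ : ℝ} (hm : 0 < m) (hδ : 0 < δ)
    (hc : c ∈ Icc a b) (hφ : ∀ r ∈ Ioo a b, HasDerivAt φ (φ' r) r)
    (hφ' : ∀ r ∈ Ioo a b, HasDerivAt φ' (φ'' r) r) (hnonneg : ∀ r ∈ Ioo a b, 0 ≤ φ'' r)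
    (hle : ∀ r ∈ Ioo a b, m * |r - c| ≤ |φ' r|) :
    ‖∫ r in a..b, cexp (I * φ r)‖ ≤ 8 / (m * δ) + 2 * δ := by
  have far_le {x y : ℝ} (hxy : x ≤ y) (hsub : Ioo x y ⊆ Ioo a b)
      (hfar : ∀ r ∈ Ioo x y, δ ≤ |r - c|) :
      ‖∫ r in x..y, cexp (I * φ r)‖ ≤ 4 / (m * δ) :=
    norm_integral_cexp_le_of_le_abs_deriv hxy (mul_pos hm hδ) (fun r hr => hφ r (hsub hr))
      (fun r hr => hφ' r (hsub hr)) (fun r hr => hnonneg r (hsub hr)) fun r hr =>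
      (mul_le_mul_of_nonneg_left (hfar r hr) hm.le).trans (hle r (hsub hr))
  set p := max a (c - δ)
  set q := min b (c + δ)
  have hap : a ≤ p := le_max_left _ _
  have hqb : q ≤ b := min_le_left _ _
  have hpc : p ≤ c := max_le hc.1 (by linarith)
  have hcq : c ≤ q := le_min hc.2 (by linarith)
  have hleft : ‖∫ r in a..p, cexp (I * φ r)‖ ≤ 4 / (m * δ) := by
    refine far_le hap (Ioo_subset_Ioo_right (hpc.trans hc.2)) fun r hr => ?_
    have : r < c - δ := (lt_max_iff.1 hr.2).resolve_left hr.1.not_gt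
    exact le_abs.2 (.inr (by linarith))
  have hright : ‖∫ r in q..b, cexp (I * φ r)‖ ≤ 4 / (m * δ) := by
    refine far_le hqb (Ioo_subset_Ioo_left (hc.1.trans hcq)) fun r hr => ?_
    have : c + δ < r := (min_lt_iff.1 hr.1).resolve_left hr.2.not_gt
    exact le_abs.2 (.inl (by linarith))
  have hmiddle : ‖∫ r in p..q, cexp (I * φ r)‖ ≤ 2 * δ := by
    refine (norm_integral_cexp_le_sub (hpc.trans hcq)).trans ?_
    linarith [le_max_right a (c - δ), min_le_right b (c + δ)]
  have hint := intervalIntegrable_cexp_I_mul (hc.1.trans hc.2) (HasDerivAt.continuousOn hφ)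
  calc ‖∫ r in a..b, cexp (I * φ r)‖
      ≤ ‖∫ r in a..p, cexp (I * φ r)‖ + ‖∫ r in p..q, cexp (I * φ r)‖ +
          ‖∫ r in q..b, cexp (I * φ r)‖ := norm_integral_le_norm_integral_add_add hint
          (mem_uIcc_of_le hap (hpc.trans hc.2)) (mem_uIcc_of_le (hc.1.trans hcq) hqb)
    _ ≤ 4 / (m * δ) + 2 * δ + 4 / (m * δ) := by gcongr
    _ = 8 / (m * δ) + 2 * δ := by ring

lemma norm_integral_cexp_le_of_le_second_deriv (hab : a ≤ b) (hm : 0 < m)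
    (hφ : ∀ r ∈ Ioo a b, HasDerivAt φ (φ' r) r) (hφ' : ∀ r ∈ Ioo a b, HasDerivAt φ' (φ'' r) r)
    (hle : ∀ r ∈ Ioo a b, m ≤ φ'' r) :
    ‖∫ r in a..b, cexp (I * φ r)‖ ≤ 8 / √m := by
  refine norm_integral_le_of_forall_subinterval (by positivity) hab
    (intervalIntegrable_cexp_I_mul hab (HasDerivAt.continuousOn hφ)) fun x y hax hxy hyb => ?_
  have hsub : Icc x y ⊆ Ioo a b := Icc_subset_Ioo hax hyb
  have hφ'_xy : ∀ r ∈ Icc x y, HasDerivAt φ' (φ'' r) r := fun r hr => hφ' r (hsub hr)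
  have hsub' : Ioo x y ⊆ Icc x y := Ioo_subset_Icc_self
  have hφ'_cont : ContinuousOn φ' (Icc x y) := HasDerivAt.continuousOn hφ'_xy
  have hslope : ∀ r ∈ Icc x y, ∀ s ∈ Icc x y, r ≤ s → m * (s - r) ≤ φ' s - φ' r :=
    (convex_Icc x y).mul_sub_le_image_sub_of_le_deriv hφ'_cont
      (fun r hr => (hφ'_xy r (interior_subset hr)).differentiableAt.differentiableWithinAt)
      fun r hr => (hφ'_xy r (interior_subset hr)).deriv ▸ hle r (hsub (interior_subset hr))
  obtain ⟨c, hc, hdist⟩ := exists_forall_mul_abs_sub_le_abs hxy hφ'_cont hslope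
  have hm_sqrt : m = √m ^ 2 := (Real.sq_sqrt hm.le).symm
  calc ‖∫ r in x..y, cexp (I * φ r)‖
      ≤ 8 / (m * (2 / √m)) + 2 * (2 / √m) :=
        norm_integral_cexp_le_of_mul_abs_sub_le_abs_deriv hm (by positivity) hc
          (fun r hr => hφ r (hsub (hsub' hr))) (fun r hr => hφ'_xy r (hsub' hr))
          (fun r hr => hm.le.trans (hle r (hsub (hsub' hr)))) fun r hr => hdist r (hsub' hr)
    _ = 8 / √m := by
      nth_rewrite 1 [hm_sqrt]
      field_simp
      norm_num

lemma norm_integral_cexp_le_of_le_abs_second_deriv (hab : a ≤ b) (hm : 0 < m)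
    (hφ : ∀ r ∈ Ioo a b, HasDerivAt φ (φ' r) r) (hφ' : ∀ r ∈ Ioo a b, HasDerivAt φ' (φ'' r) r)
    (hle : ∀ r ∈ Ioo a b, m ≤ |φ'' r|) :
    ‖∫ r in a..b, cexp (I * φ r)‖ ≤ 8 / √m := by
  rcases forall_le_or_forall_le_neg_of_le_abs_deriv (convex_Ioo a b) hm
    (fun r hr => (hφ' r hr).hasDerivWithinAt) hle with hconvex | hconcave
  · exact norm_integral_cexp_le_of_le_second_deriv hab hm hφ hφ' hconvex
  · rw [← norm_integral_cexp_I_mul_neg]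
    exact norm_integral_cexp_le_of_le_second_deriv hab hm (fun r hr => (hφ r hr).fun_neg)
      (fun r hr => (hφ' r hr).fun_neg) fun r hr => le_neg_of_le_neg (hconcave r hr)

end Oscillatory

theorem van_der_corput_general {E : Type*} [NormedAddCommGroup E] [NormedSpace ℂ E]
    [CompleteSpace E] {a b t A : ℝ} (hab : a ≤ b) (ht : t ≠ 0) (hA : 0 < A)
    {g g' : ℝ → E} {ψ ψ' ψ'' : ℝ → ℝ} (hg : ContinuousOn g (Set.Icc a b))
    (hgg' : ∀ r ∈ Set.Ioo a b, HasDerivAt g (g' r) r) (hg' : IntervalIntegrable g' volume a b)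
    (hψ : ∀ r ∈ Set.Ioo a b, HasDerivAt ψ (ψ' r) r)
    (hψ' : ∀ r ∈ Set.Ioo a b, HasDerivAt ψ' (ψ'' r) r)
    (hle : ∀ r ∈ Set.Ioo a b, A ≤ |ψ'' r|) :
    ‖∫ r in a..b, cexp (I * (t * ψ r)) • g r‖ ≤
      8 * (A * |t|) ^ (-(1 : ℝ) / 2) * (‖g b‖ + ∫ r in a..b, ‖g' r‖) := by
  have hAt : 0 < A * |t| := mul_pos hA (abs_pos.2 ht)
  have hconst : 8 * (A * |t|) ^ (-(1 : ℝ) / 2) = 8 / √(A * |t|) := by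
    rw [neg_div, Real.rpow_neg hAt.le, ← Real.sqrt_eq_rpow, div_eq_mul_inv]
  have hphase : ∀ r ∈ Set.Ioo a b, HasDerivAt (fun r => t * ψ r) (t * ψ' r) r :=
    fun r hr => (hψ r hr).const_mul t
  have hphase_cont : ContinuousOn (fun r => t * ψ r) (Set.Ioo a b) :=
    HasDerivAt.continuousOn hphase
  have primitive_le : ∀ x ∈ Set.Icc a b,
      ‖∫ r in a..x, cexp (I * (t * ψ r : ℝ))‖ ≤ 8 / √(A * |t|) := by
    intro x hx
    have hsub : Set.Ioo a x ⊆ Set.Ioo a b := Set.Ioo_subset_Ioo_right hx.2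
    refine norm_integral_cexp_le_of_le_abs_second_deriv hx.1 hAt
      (fun r hr => hphase r (hsub hr)) (fun r hr => (hψ' r (hsub hr)).const_mul t) fun r hr => ?_
    rw [abs_mul, mul_comm A]
    exact mul_le_mul_of_nonneg_left (hle r (hsub hr)) (abs_nonneg t)
  rw [hconst]
  simpa only [ofReal_mul] using norm_integral_smul_le_of_norm_primitive_le hab (by fun_prop)
    (intervalIntegrable_cexp_I_mul hab hphase_cont) hg hgg' hg' primitive_le

/-- Van der Corput's Lemma: there is an absolute constant `C > 0` such that for all
`a < b`, `t > 0`, `A > 0`, every `g ∈ C¹` on `[a,b]` (with derivative `g'`) and every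
`ψ ∈ C²` on `[a,b]` (with derivatives `ψ'`, `ψ''`) satisfying `|ψ''(r)| ≥ A` on `(a,b)`,
`|∫_a^b e^{itψ(r)} g(r) dr| ≤ C (At)^{-1/2} (|g(b)| + ∫_a^b |g'(r)| dr)`. -/
theorem van_der_corput :
    ∃ C > 0, ∀ (a b : ℝ), a < b → ∀ (t A : ℝ), 0 < t → 0 < A →
      ∀ (g g' : ℝ → ℂ) (ψ ψ' ψ'' : ℝ → ℝ),
        (∀ r ∈ Set.Icc a b, HasDerivWithinAt g (g' r) (Set.Icc a b) r) →
        ContinuousOn g' (Set.Icc a b) →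
        (∀ r ∈ Set.Icc a b, HasDerivWithinAt ψ (ψ' r) (Set.Icc a b) r) →
        (∀ r ∈ Set.Icc a b, HasDerivWithinAt ψ' (ψ'' r) (Set.Icc a b) r) →
        ContinuousOn ψ'' (Set.Icc a b) →
        (∀ r ∈ Set.Ioo a b, A ≤ |ψ'' r|) →
        ‖∫ r in a..b, Complex.exp (Complex.I * (t * ψ r)) * g r‖ ≤
          C * (A * t) ^ (-(1 : ℝ) / 2) * (‖g b‖ + ∫ r in a..b, ‖g' r‖) := by
  exact ⟨8, by norm_num, fun a b hab t A ht hA g g' ψ ψ' ψ'' hg hg' hψ hψ' _ hle => by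
    simpa only [abs_of_pos ht, smul_eq_mul] using van_der_corput_general hab.le ht.ne' hA
      (fun r hr => (hg r hr).continuousWithinAt) (hasDerivAt_of_hasDerivWithinAt_Icc hg)
      (hg'.intervalIntegrable_of_Icc hab.le) (hasDerivAt_of_hasDerivWithinAt_Icc hψ)
      (hasDerivAt_of_hasDerivWithinAt_Icc hψ') hle⟩
end
end

section
/- Let β ∈ {0,1}. For all r > 0, m_β'(r) ∼ ⟨√β r⟩ ⟨r⟩^{-1/2}; that is, there are absolute constants c₁, c₂ > 0 with c₁ ⟨√β r⟩ ⟨r⟩^{-1/2} ≤ m_β'(r) ≤ c₂ ⟨√β r⟩ ⟨r⟩^{-1/2} for all r > 0. In particular m_β' is positive on (0, ∞). -/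
noncomputable section

open Real

/-- Japanese bracket `⟨x⟩ = (1+|x|²)^{1/2}`. -/
def jap (x : ℝ) : ℝ := Real.sqrt (1 + x ^ 2)

/-- The symbol `m_β(r) = √(r(1+βr²)tanh r)`. -/
def mSymb (β r : ℝ) : ℝ := Real.sqrt (r * (1 + β * r ^ 2) * Real.tanh r)

/-!
The logarithmic derivative of `m_β² = r (1 + β r²) tanh r` satisfies
`r (log m_β²)' = 1 + 2 β r² / (1 + β r²) + 2 r / sinh (2 r)`, which lies between `1` and `4`, so
`m_β'(r)` is comparable to `m_β(r) / r`. Moreover `m_β(r) = ⟨√β r⟩ √(r tanh r)`, and `tanh r` is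
comparable to `r / ⟨r⟩`: from below because `r / ⟨r⟩ = tanh (arsinh r)` and `arsinh r ≤ r`, from
above because `tanh r ≤ min r 1`.
-/

theorem logDeriv_sqrt {f : ℝ → ℝ} {x : ℝ} (hf : DifferentiableAt ℝ f x) (hx : 0 < f x) :
    logDeriv (fun y => √(f y)) x = logDeriv f x / 2 := by
  rw [logDeriv_apply, logDeriv_apply, deriv_sqrt hf hx.ne', div_div, mul_assoc,
    mul_self_sqrt hx.le, mul_comm 2, div_div]

theorem rpow_neg_one_half_sq {x : ℝ} (hx : 0 ≤ x) : (x ^ (-(1 : ℝ) / 2)) ^ 2 = x⁻¹ := by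
  rw [← rpow_mul_natCast hx, ← rpow_neg_one]
  norm_num

section Tanh

variable {x : ℝ}

theorem hasDerivAt_tanh (x : ℝ) : HasDerivAt tanh (1 / cosh x ^ 2) x := by
  have hquot := (hasDerivAt_sinh x).div (hasDerivAt_cosh x) (cosh_pos x).ne'
  have htanh : sinh / cosh = tanh := funext fun y => (tanh_eq_sinh_div_cosh y).symm
  rw [htanh] at hquot
  exact hquot.congr_deriv (by rw [← sq, ← sq, cosh_sq_sub_sinh_sq])

theorem logDeriv_tanh (x : ℝ) : logDeriv tanh x = 2 / sinh (2 * x) := by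
  have hcosh := (cosh_pos x).ne'
  rw [logDeriv_apply, (hasDerivAt_tanh x).deriv, tanh_eq_sinh_div_cosh, sinh_two_mul]
  field_simp [hcosh]

theorem strictMono_tanh : StrictMono tanh :=
  strictMono_of_deriv_pos fun x => by
    rw [(hasDerivAt_tanh x).deriv]
    exact one_div_pos.2 (pow_pos (cosh_pos x) 2)

theorem tanh_pos (hx : 0 < x) : 0 < tanh x := by
  simpa only [tanh_zero] using strictMono_tanh hx

theorem tanh_nonneg (hx : 0 ≤ x) : 0 ≤ tanh x := by
  simpa only [tanh_zero] using strictMono_tanh.monotone hx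

theorem tanh_le_self (hx : 0 ≤ x) : tanh x ≤ x := by
  have hderiv (y : ℝ) : deriv tanh y ≤ 1 := by
    rw [(hasDerivAt_tanh y).deriv]
    exact div_le_one_of_le₀ (one_le_pow₀ (one_le_cosh y)) (sq_nonneg _)
  simpa using image_sub_le_mul_sub_of_deriv_le
    (fun y => (hasDerivAt_tanh y).differentiableAt) hderiv hx

end Tanh

theorem jap_pos (x : ℝ) : 0 < jap x :=
  sqrt_pos.2 (by positivity)

theorem jap_sq (x : ℝ) : jap x ^ 2 = 1 + x ^ 2 :=
  sq_sqrt (by positivity)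

theorem div_jap_le_tanh {x : ℝ} (hx : 0 ≤ x) : x / jap x ≤ tanh x := by
  have harsinh : arsinh x ≤ x := by
    rw [← sinh_le_sinh, sinh_arsinh]
    exact self_le_sinh_iff.2 hx
  calc x / jap x = tanh (arsinh x) := (tanh_arsinh x).symm
    _ ≤ tanh x := strictMono_tanh.monotone harsinh

theorem tanh_le_sqrt_two_mul_div_jap {x : ℝ} (hx : 0 ≤ x) : tanh x ≤ √2 * (x / jap x) := by
  rw [← mul_div_assoc, le_div_iff₀ (jap_pos x)]
  refine le_of_sq_le_sq ?_ (by positivity)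
  have hself : tanh x ^ 2 ≤ x ^ 2 := pow_le_pow_left₀ (tanh_nonneg hx) (tanh_le_self hx) 2
  calc (tanh x * jap x) ^ 2 = tanh x ^ 2 + tanh x ^ 2 * x ^ 2 := by rw [mul_pow, jap_sq]; ring
    _ ≤ x ^ 2 + 1 * x ^ 2 := by gcongr; exact (tanh_sq_lt_one x).le
    _ = (√2 * x) ^ 2 := by rw [mul_pow, sq_sqrt two_pos.le]; ring

section Symbol

variable {β r : ℝ}

theorem mSymb_pos (hβ : 0 ≤ β) (hr : 0 < r) : 0 < mSymb β r :=
  have := tanh_pos hr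
  sqrt_pos.2 (by positivity)

theorem mSymb_eq_jap_mul_sqrt (hβ : 0 ≤ β) (r : ℝ) :
    mSymb β r = jap (√β * r) * √(r * tanh r) := by
  rw [jap, ← sqrt_mul (by positivity), mul_pow, sq_sqrt hβ, mSymb]
  ring_nf

theorem mul_rpow_jap_le_sqrt_mul_tanh (hr : 0 ≤ r) :
    r * jap r ^ (-(1 : ℝ) / 2) ≤ √(r * tanh r) := by
  refine le_sqrt_of_sq_le ?_
  calc (r * jap r ^ (-(1 : ℝ) / 2)) ^ 2 = r * (r / jap r) := by
        rw [mul_pow, rpow_neg_one_half_sq (jap_pos r).le]; ring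
    _ ≤ r * tanh r := by gcongr; exact div_jap_le_tanh hr

theorem sqrt_mul_tanh_le_mul_rpow_jap (hr : 0 ≤ r) :
    √(r * tanh r) ≤ √2 * (r * jap r ^ (-(1 : ℝ) / 2)) := by
  have hjap := jap_pos r
  have hsqrt : √2 ≤ 2 := sqrt_le_iff.2 ⟨two_pos.le, by norm_num⟩
  refine sqrt_le_iff.2 ⟨by positivity, ?_⟩
  calc r * tanh r ≤ r * (2 * (r / jap r)) := by
        gcongr
        grw [tanh_le_sqrt_two_mul_div_jap hr, hsqrt]
    _ = (√2 * (r * jap r ^ (-(1 : ℝ) / 2))) ^ 2 := by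
        rw [mul_pow, mul_pow, rpow_neg_one_half_sq hjap.le, sq_sqrt two_pos.le]; ring

theorem mul_logDeriv_mSymb (hβ : 0 ≤ β) (hr : 0 < r) :
    r * logDeriv (mSymb β) r =
      (1 + 2 * (β * r ^ 2) / (1 + β * r ^ 2) + 2 * r / sinh (2 * r)) / 2 := by
  have hpoly : 0 < 1 + β * r ^ 2 := by positivity
  have htanh := tanh_pos hr
  have htanhDiff := (hasDerivAt_tanh r).differentiableAt
  have hpolyLog : logDeriv (fun x => 1 + β * x ^ 2) r = 2 * β * r / (1 + β * r ^ 2) := by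
    have hpolyDeriv : HasDerivAt (fun x => 1 + β * x ^ 2) (2 * β * r) r :=
      (((hasDerivAt_pow 2 r).const_mul β).const_add 1).congr_deriv (by push_cast; ring)
    rw [logDeriv_apply, hpolyDeriv.deriv]
  rw [show mSymb β = fun x => √(x * (1 + β * x ^ 2) * tanh x) from rfl,
    logDeriv_sqrt (by fun_prop) (by positivity),
    logDeriv_mul r (by positivity) htanh.ne' (by fun_prop) htanhDiff,
    logDeriv_mul r hr.ne' hpoly.ne' (by fun_prop) (by fun_prop),
    logDeriv_id', hpolyLog, logDeriv_tanh]
  field_simp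

theorem mul_logDeriv_mSymb_mem_Icc (hβ : 0 ≤ β) (hr : 0 < r) :
    r * logDeriv (mSymb β) r ∈ Set.Icc (1 / 2) 2 := by
  have hsinh : 2 * r ≤ sinh (2 * r) := self_le_sinh_iff.2 (by positivity)
  have hsinhPos : 0 < sinh (2 * r) := by linarith
  have htanhTerm : 2 * r / sinh (2 * r) ≤ 1 := div_le_one_of_le₀ hsinh hsinhPos.le
  have htanhTermNonneg : 0 ≤ 2 * r / sinh (2 * r) := by positivity
  have hpolyTerm : 2 * (β * r ^ 2) / (1 + β * r ^ 2) ≤ 2 :=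
    div_le_of_le_mul₀ (by positivity) two_pos.le (by linarith)
  have hpolyTermNonneg : 0 ≤ 2 * (β * r ^ 2) / (1 + β * r ^ 2) := by positivity
  rw [mul_logDeriv_mSymb hβ hr]
  constructor <;> linarith

theorem deriv_mSymb_eq (hβ : 0 ≤ β) (hr : 0 < r) :
    deriv (mSymb β) r =
      r * logDeriv (mSymb β) r * (jap (√β * r) * (√(r * tanh r) / r)) := by
  have hm := (mSymb_pos hβ hr).ne'
  rw [← mul_div_assoc, ← mSymb_eq_jap_mul_sqrt hβ, logDeriv_apply]
  field_simp

end Symbol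

theorem deriv_mSymb_comparable_general :
    ∃ c₁ > (0 : ℝ), ∃ c₂ > (0 : ℝ), ∀ β : ℝ, 0 ≤ β → ∀ r : ℝ, 0 < r →
      (c₁ * (jap (√β * r) * jap r ^ (-(1 : ℝ) / 2)) ≤ deriv (mSymb β) r ∧
        deriv (mSymb β) r ≤ c₂ * (jap (√β * r) * jap r ^ (-(1 : ℝ) / 2))) ∧
      0 < deriv (mSymb β) r := by
  refine ⟨1 / 2, by positivity, 2 * √2, by positivity, fun β hβ r hr => ?_⟩
  obtain ⟨hlogLower, hlogUpper⟩ := mul_logDeriv_mSymb_mem_Icc hβ hr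
  have hjapβ := jap_pos (√β * r)
  have hjap := jap_pos r
  have hlower : jap r ^ (-(1 : ℝ) / 2) ≤ √(r * tanh r) / r := by
    rw [le_div_iff₀' hr]
    exact mul_rpow_jap_le_sqrt_mul_tanh hr.le
  have hupper : √(r * tanh r) / r ≤ √2 * jap r ^ (-(1 : ℝ) / 2) := by
    rw [div_le_iff₀' hr, mul_left_comm]
    exact sqrt_mul_tanh_le_mul_rpow_jap hr.le
  have hderivLower :
      1 / 2 * (jap (√β * r) * jap r ^ (-(1 : ℝ) / 2)) ≤ deriv (mSymb β) r := by
    rw [deriv_mSymb_eq hβ hr]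
    gcongr
  refine ⟨⟨hderivLower, ?_⟩, hderivLower.trans_lt' (by positivity)⟩
  calc deriv (mSymb β) r
      ≤ 2 * (jap (√β * r) * (√2 * jap r ^ (-(1 : ℝ) / 2))) := by
        rw [deriv_mSymb_eq hβ hr]
        gcongr
    _ = 2 * √2 * (jap (√β * r) * jap r ^ (-(1 : ℝ) / 2)) := by ring

/-- `m_β'(r) ∼ ⟨√β r⟩ ⟨r⟩^{-1/2}` for all `r > 0`, `β ∈ {0,1}`; in particular
`m_β'` is positive on `(0,∞)`. -/
theorem deriv_mSymb_comparable (β : ℝ) (hβ : β = 0 ∨ β = 1) :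
    ∃ c₁ > (0 : ℝ), ∃ c₂ > (0 : ℝ), ∀ r : ℝ, 0 < r →
      (c₁ * (jap (Real.sqrt β * r) * jap r ^ (-(1 : ℝ) / 2)) ≤ deriv (mSymb β) r ∧
        deriv (mSymb β) r ≤ c₂ * (jap (Real.sqrt β * r) * jap r ^ (-(1 : ℝ) / 2))) ∧
      0 < deriv (mSymb β) r := by
  obtain ⟨c₁, hc₁, c₂, hc₂, h⟩ := deriv_mSymb_comparable_general
  exact ⟨c₁, hc₁, c₂, hc₂, h β (by rcases hβ with rfl | rfl <;> norm_num)⟩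
end
end
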